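/- arXiv:0706.3828 — 2 statements merged into one kernel-verified Lean document; each statement's English description precedes it below -/
import Mathlib

section
/- Let x ∈ sl(n,ℂ) be a nilpotent traceless matrix whose Jordan type is the partition b_1 ≥ b_2 ≥ … ≥ b_m ≥ 1 of n; that is, ℂⁿ decomposes as a direct sum of x-invariant subspaces V_1 ⊕ … ⊕ V_m with dim V_i = b_i on each of which x restricts to a cyclic (nilpotent) endomorphism. Let 𝔰_x = {y ∈ sl(n,ℂ) : xy − yx = 0} be the centralizer of x in sl(n,ℂ). Then dim 𝔰_x − dim [𝔰_x, 𝔰_x] = b_1 − 1. -/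
/-- An endomorphism `u` of a finite-dimensional complex vector space `V` is *cyclic* if
there is a vector `e` such that `e, u e, u² e, …, u^(dim V − 1) e` is a basis of `V`. -/
def IsCyclicEnd {V : Type*} [AddCommGroup V] [Module ℂ V] (u : Module.End ℂ V) : Prop :=
  ∃ e : V,
    LinearIndependent ℂ (fun k : Fin (Module.finrank ℂ V) => (u ^ (k : ℕ)) e) ∧
    Submodule.span ℂ (Set.range fun k : Fin (Module.finrank ℂ V) => (u ^ (k : ℕ)) e) = ⊤

/-!
Let `C` be the centralizer of `x` among all matrices. Along a basis made of strings
`eᵢ, x eᵢ, …, x ^ (bᵢ - 1) eᵢ`, it is spanned by the maps in `C` that send `eⱼ` to `x ^ k eᵢ`,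
where `bᵢ ≤ k + bⱼ`, and kill the other strings. For the projections `pᵢ` to the strings, the
off-diagonal part `u - ∑ pᵢ u pᵢ` of `u ∈ C` is a sum of commutators in `C`, so `C / [C, C]` can
be read off the diagonal part, which is determined by the vectors `pᵢ u eᵢ`. These sweep out the
whole space for `u ∈ C`, and for `u ∈ [C, C]` the span of the differences `x ^ k eᵢ - x ^ k eⱼ`
with `k ≥ |bᵢ - bⱼ|`. When the `bᵢ` decrease, the nonzero differences of consecutive strings are a
basis of this span. There are `b₂ + … + bₘ` of them, so `[C, C]` has codimension `b₁` in `C`.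
Passing to traceless matrices costs one dimension in `C` and nothing in `[C, C]`, since scalars
are central.
-/

open Module

section Commutators

variable {R A B : Type*} [CommRing R] [Ring A] [Algebra R A] [Ring B] [Algebra R B]

/-- The span of the commutators `u * v - v * u` with `u, v ∈ S`, written `[S, S]` on paper. It is
encoded as an image under the bilinear commutator, so that it can be computed on a spanning set
of `S`. -/
def commutatorSpan (S : Submodule R A) : Submodule R A :=
  Submodule.map₂ (LinearMap.mul R A - (LinearMap.mul R A).flip) S S

theorem commutatorSpan_eq_span (S : Submodule R A) :
    commutatorSpan S = Submodule.span R {w | ∃ u ∈ S, ∃ v ∈ S, w = u * v - v * u} := by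
  rw [commutatorSpan, Submodule.map₂_eq_span_image2]
  congr 1
  ext w
  simp [Set.image2, eq_comm]

theorem commutator_mem_commutatorSpan {S : Submodule R A} {u v : A} (hu : u ∈ S) (hv : v ∈ S) :
    u * v - v * u ∈ commutatorSpan S :=
  Submodule.apply_mem_map₂ (LinearMap.mul R A - (LinearMap.mul R A).flip) hu hv

theorem commutatorSpan_le {S T : Submodule R A} :
    commutatorSpan S ≤ T ↔ ∀ u ∈ S, ∀ v ∈ S, u * v - v * u ∈ T :=
  Submodule.map₂_le

theorem commutatorSpan_span_le {s : Set A} {T : Submodule R A} :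
    commutatorSpan (Submodule.span R s) ≤ T ↔ ∀ u ∈ s, ∀ v ∈ s, u * v - v * u ∈ T := by
  rw [commutatorSpan, Submodule.map₂_span_span, Submodule.span_le, Set.image2_subset_iff]
  rfl

theorem commutatorSpan_toSubmodule_le (S : Subalgebra R A) :
    commutatorSpan S.toSubmodule ≤ S.toSubmodule :=
  commutatorSpan_le.2 fun _ hu _ hv => sub_mem (S.mul_mem hu hv) (S.mul_mem hv hu)

theorem map_commutatorSpan (f : A →ₐ[R] B) (S : Submodule R A) :
    (commutatorSpan S).map f.toLinearMap = commutatorSpan (S.map f.toLinearMap) := by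
  refine le_antisymm (Submodule.map_le_iff_le_comap.2 (commutatorSpan_le.2 fun u hu v hv => ?_))
    (commutatorSpan_le.2 ?_)
  · simpa using commutator_mem_commutatorSpan (Submodule.mem_map_of_mem (f := f.toLinearMap) hu)
      (Submodule.mem_map_of_mem (f := f.toLinearMap) hv)
  · rintro _ ⟨u, hu, rfl⟩ _ ⟨v, hv, rfl⟩
    exact ⟨u * v - v * u, commutator_mem_commutatorSpan hu hv, by simp⟩

theorem sub_sum_mul_mul_mem_commutatorSpan {I : Type*} [Fintype I] {e : I → A}
    (he : CompleteOrthogonalIdempotents e) {S : Subalgebra R A} (heS : ∀ i, e i ∈ S) {u : A}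
    (hu : u ∈ S) : u - ∑ i, e i * u * e i ∈ commutatorSpan S.toSubmodule := by
  -- The off-diagonal row `e i * u * (1 - e i)` is its own commutator with `e i`.
  have row (i : I) : e i * u - e i * u * e i =
      e i * (e i * u * (1 - e i)) - e i * u * (1 - e i) * e i := by
    have left : e i * (e i * u * (1 - e i)) = e i * u * (1 - e i) := by
      rw [← mul_assoc, ← mul_assoc, (he.idem i).eq]
    have right : e i * u * (1 - e i) * e i = 0 := by
      rw [mul_assoc, (he.idem i).one_sub_mul_self, mul_zero]
    rw [left, right, sub_zero, mul_sub, mul_one]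
  have sum_rows : u - ∑ i, e i * u * e i = ∑ i, (e i * u - e i * u * e i) := by
    rw [Finset.sum_sub_distrib, ← Finset.sum_mul, he.complete, one_mul]
  rw [sum_rows]
  refine Submodule.sum_mem _ fun i _ => ?_
  rw [row i]
  exact commutator_mem_commutatorSpan (heS i)
    (S.mul_mem (S.mul_mem (heS i) hu) (S.sub_mem S.one_mem (heS i)))

variable (R) in
theorem mem_centralizer_singleton {x y : A} :
    y ∈ Subalgebra.centralizer R {x} ↔ Commute x y := by
  simp [Subalgebra.mem_centralizer_iff, Commute, SemiconjBy]

theorem toSubmodule_centralizer_singleton (x : A) :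
    (Subalgebra.centralizer R {x}).toSubmodule =
      LinearMap.ker (LinearMap.mulLeft R x - LinearMap.mulRight R x) := by
  ext y
  simp [mem_centralizer_singleton, sub_eq_zero, Commute, SemiconjBy]

theorem map_centralizer_singleton (f : A ≃ₐ[R] B) (x : A) :
    (Subalgebra.centralizer R {x}).toSubmodule.map f.toLinearMap =
      (Subalgebra.centralizer R {f x}).toSubmodule := by
  ext y
  rw [Subalgebra.mem_toSubmodule, mem_centralizer_singleton]
  constructor
  · rintro ⟨z, hz, rfl⟩
    exact ((mem_centralizer_singleton R).1 hz).map f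
  · intro h
    refine ⟨f.symm y, (mem_centralizer_singleton R).2 ?_, by simp⟩
    simpa using h.map f.symm

end Commutators

section TraceZero

variable {K V W A : Type*} [Field K] [AddCommGroup V] [Module K V] [AddCommGroup W] [Module K W]
  [Ring A] [Algebra K A]

theorem finrank_map_add_finrank_inf_ker (f : V →ₗ[K] W) (S : Submodule K V)
    [FiniteDimensional K S] :
    finrank K (S.map f) + finrank K (S ⊓ LinearMap.ker f : Submodule K V) = finrank K S := by
  rw [← LinearMap.finrank_range_add_finrank_ker (f.domRestrict S), LinearMap.range_domRestrict,
    LinearMap.ker_domRestrict, ← Submodule.map_comap_subtype,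
    Submodule.finrank_map_subtype_eq]

theorem finrank_ker_inf_add_one {f : Dual K V} {S : Submodule K V} [FiniteDimensional K S] {v : V}
    (hv : v ∈ S) (hfv : f v ≠ 0) :
    finrank K (LinearMap.ker f ⊓ S : Submodule K V) + 1 = finrank K S := by
  have map_eq_top : S.map f = ⊤ :=
    (eq_bot_or_eq_top (S.map f)).resolve_left fun h =>
      hfv <| (Submodule.mem_bot K).1 <| h ▸ Submodule.mem_map_of_mem hv
  rw [← finrank_map_add_finrank_inf_ker f S, map_eq_top, finrank_top, finrank_self, inf_comm,
    add_comm]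

theorem commutatorSpan_ker_inf {τ : Dual K A} (hτ : τ 1 ≠ 0) {S : Submodule K A} (hS : 1 ∈ S) :
    commutatorSpan (LinearMap.ker τ ⊓ S) = commutatorSpan S := by
  have mem : ∀ u ∈ S, u - (τ u / τ 1) • 1 ∈ LinearMap.ker τ ⊓ S := fun u hu =>
    ⟨by simp [hτ], sub_mem hu (S.smul_mem _ hS)⟩
  refine le_antisymm (Submodule.map₂_le_map₂ inf_le_right inf_le_right)
    (commutatorSpan_le.2 fun u hu v hv => ?_)
  convert commutator_mem_commutatorSpan (mem u hu) (mem v hv) using 1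
  simp only [mul_sub, sub_mul, smul_mul_assoc, mul_smul_comm, one_mul, mul_one]
  module

end TraceZero

theorem linearIndependent_of_triangular {R M I α : Type*} [CommRing R] [AddCommGroup M]
    [Module R M] [Preorder α] [WellFoundedLT α] (r : I → α) {v : I → M} {φ : I → Dual R M}
    (diag : ∀ i, φ i (v i) = 1) (off_diag : ∀ i j, j ≠ i → ¬ r j < r i → φ i (v j) = 0) :
    LinearIndependent R v := by
  refine linearIndependent_iff'.2 fun s g hg i => ?_
  induction i using (InvImage.wf r (wellFounded_lt (α := α))).induction with
  | _ i ih =>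
    intro hi
    have apply_dual : ∑ j ∈ s, g j * φ i (v j) = 0 := by
      simpa using congrArg (φ i) hg
    rwa [Finset.sum_eq_single_of_mem i hi, diag, mul_one] at apply_dual
    intro j hj hji
    by_cases hlt : r j < r i
    · rw [ih j hlt hj, zero_mul]
    · rw [off_diag i j hji hlt, mul_zero]

/-- A basis of `W` made of strings `gen i, x (gen i), …, x ^ (b i - 1) (gen i)` of the
endomorphism `x`, with `x ^ (b i)` killing `gen i`: the data of a Jordan normal form of the
nilpotent endomorphism `x` with block sizes `b`. -/
structure StringBasis {R W I : Type*} [CommRing R] [AddCommGroup W] [Module R W]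
    (x : End R W) (b : I → ℕ) where
  gen : I → W
  basis : Basis (Σ i, Fin (b i)) R W
  basis_apply : ∀ i (k : Fin (b i)), basis ⟨i, k⟩ = (x ^ (k : ℕ)) (gen i)
  pow_gen : ∀ i, (x ^ b i) (gen i) = 0

namespace StringBasis

section Vec

variable {R W I : Type*} [CommRing R] [AddCommGroup W] [Module R W] {x : End R W} {b : I → ℕ}
  (J : StringBasis x b)

/-- The `k`-th vector of the `i`-th string, for any `k : ℕ`; it vanishes for `b i ≤ k`. -/
def vec (i : I) (k : ℕ) : W := (x ^ k) (J.gen i)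

theorem vec_eq_basis {i : I} {k : ℕ} (h : k < b i) : J.vec i k = J.basis ⟨i, ⟨k, h⟩⟩ :=
  (J.basis_apply i ⟨k, h⟩).symm

theorem basis_eq_vec (p : Σ i, Fin (b i)) : J.basis p = J.vec p.1 p.2 :=
  J.basis_apply p.1 p.2

theorem vec_eq_zero {i : I} {k : ℕ} (h : b i ≤ k) : J.vec i k = 0 := by
  obtain ⟨l, rfl⟩ := Nat.exists_eq_add_of_le' h
  rw [vec, pow_add, Module.End.mul_apply, J.pow_gen, map_zero]

theorem pow_vec (i : I) (k l : ℕ) : (x ^ l) (J.vec i k) = J.vec i (k + l) := by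
  rw [vec, vec, add_comm, pow_add, Module.End.mul_apply]

theorem apply_vec (i : I) (k : ℕ) : x (J.vec i k) = J.vec i (k + 1) := by
  simpa using J.pow_vec i k 1

theorem apply_vec_of_commute {u : End R W} (hu : Commute x u) (i : I) (k : ℕ) :
    u (J.vec i k) = (x ^ k) (u (J.vec i 0)) := by
  rw [← Module.End.mul_apply, (hu.pow_left k).eq, Module.End.mul_apply, pow_vec, zero_add]

theorem ext_vec {U : Type*} [AddCommGroup U] [Module R U] {f g : W →ₗ[R] U}
    (h : ∀ i k, f (J.vec i k) = g (J.vec i k)) : f = g :=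
  J.basis.ext fun p => by simpa only [basis_eq_vec] using h p.1 p.2

theorem coord_vec [DecidableEq I] {i : I} {k : ℕ} (hk : k < b i) (s : I) (l : ℕ) :
    J.basis.coord ⟨i, ⟨k, hk⟩⟩ (J.vec s l) = if s = i ∧ l = k then 1 else 0 := by
  by_cases hl : l < b s
  · rw [J.vec_eq_basis hl, Basis.coord_apply, Basis.repr_self, Finsupp.single_apply]
    refine if_congr ⟨?_, ?_⟩ rfl rfl
    · rintro ⟨⟩
      exact ⟨rfl, rfl⟩
    · rintro ⟨rfl, rfl⟩
      rfl
  · rw [J.vec_eq_zero (not_lt.1 hl), map_zero, if_neg]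
    rintro ⟨rfl, rfl⟩
    exact hl hk

theorem coord_add_pow_apply {i : I} {k r : ℕ} (h : k + r < b i) (w : W) :
    J.basis.coord ⟨i, ⟨k + r, h⟩⟩ ((x ^ r) w) = J.basis.coord ⟨i, ⟨k, by omega⟩⟩ w := by
  classical
  refine LinearMap.congr_fun (J.ext_vec (f := J.basis.coord _ ∘ₗ (x ^ r)) fun s l => ?_) w
  simp only [LinearMap.comp_apply, pow_vec, coord_vec, add_left_inj]

theorem coord_apply_vec_zero_of_commute {u : End R W} (hu : Commute x u) {i j : I} {k : Fin (b i)}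
    (h : k + b j < b i) : J.basis.coord ⟨i, k⟩ (u (J.vec j 0)) = 0 := by
  rw [← J.coord_add_pow_apply h, ← J.apply_vec_of_commute hu, J.vec_eq_zero le_rfl, map_zero,
    map_zero]

/-- The span of the differences `vec i k - vec j k` with `|b i - b j| ≤ k`; these are the diagonal
parts of commutators of elements commuting with `x`. -/
def diffSpan : Submodule R W :=
  Submodule.span R {w | ∃ i j k, b i ≤ k + b j ∧ b j ≤ k + b i ∧ w = J.vec i k - J.vec j k}

theorem vec_sub_vec_mem_diffSpan {i j : I} {k : ℕ} (hij : b i ≤ k + b j) (hji : b j ≤ k + b i) :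
    J.vec i k - J.vec j k ∈ J.diffSpan :=
  Submodule.subset_span ⟨i, j, k, hij, hji, rfl⟩

end Vec

section Shift

variable {R W I : Type*} [CommRing R] [AddCommGroup W] [Module R W] [DecidableEq I]
  {x : End R W} {b : I → ℕ} (J : StringBasis x b)

/-- The endomorphism sending `basis ⟨j, l⟩` to `vec i (l + k)` and killing the other strings.
It commutes with `x` when `b i ≤ k + b j`. -/
noncomputable def shift (i j : I) (k : ℕ) : End R W :=
  J.basis.constr R fun p => if p.1 = j then J.vec i (p.2 + k) else 0

theorem shift_basis (i j : I) (k : ℕ) (p : Σ i, Fin (b i)) :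
    J.shift i j k (J.basis p) = if p.1 = j then J.vec i (p.2 + k) else 0 :=
  J.basis.constr_basis R _ p

theorem shift_vec {i j : I} {k : ℕ} (h : b i ≤ k + b j) (s : I) (l : ℕ) :
    J.shift i j k (J.vec s l) = if s = j then J.vec i (l + k) else 0 := by
  by_cases hl : l < b s
  · rw [J.vec_eq_basis hl, shift_basis]
  · rw [J.vec_eq_zero (not_lt.1 hl), map_zero]
    split_ifs with hs
    · subst hs
      rw [J.vec_eq_zero (by omega)]
    · rfl

theorem commute_shift {i j : I} {k : ℕ} (h : b i ≤ k + b j) : Commute x (J.shift i j k) := by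
  refine J.ext_vec fun s l => ?_
  simp only [Module.End.mul_apply, J.shift_vec h, apply_vec, apply_ite x, map_zero,
    add_right_comm l k 1]

theorem shift_mem_centralizer {i j : I} {k : ℕ} (h : b i ≤ k + b j) :
    J.shift i j k ∈ Subalgebra.centralizer R {x} :=
  (mem_centralizer_singleton R).2 (J.commute_shift h)

theorem shift_mul_shift {i j s t : I} {k l : ℕ} (h : b i ≤ k + b j) :
    J.shift i j k * J.shift s t l = if s = j then J.shift i t (l + k) else 0 := by
  refine J.basis.ext fun p => ?_
  rw [Module.End.mul_apply, shift_basis, apply_ite (J.shift i j k), map_zero, J.shift_vec h]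
  split_ifs <;> simp_all [shift_basis, add_assoc]

theorem completeOrthogonalIdempotents_shift [Fintype I] :
    CompleteOrthogonalIdempotents fun i => J.shift i i 0 where
  idem i := by simp [IsIdempotentElem, shift_mul_shift]
  ortho i j hij := by simp [shift_mul_shift, hij.symm]
  complete := J.ext_vec fun s l => by simp [LinearMap.sum_apply, shift_vec]

theorem eq_sum_coord_smul_shift [Fintype I] {u : End R W} (hu : Commute x u) :
    u = ∑ j, ∑ p, J.basis.coord p (u (J.vec j 0)) • J.shift p.1 j p.2 := by
  refine J.basis.ext fun q => ?_
  calc u (J.basis q)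
      = (x ^ (q.2 : ℕ)) (∑ p, J.basis.coord p (u (J.vec q.1 0)) • J.basis p) := by
        rw [basis_eq_vec, J.apply_vec_of_commute hu]
        simp only [Basis.coord_apply, Basis.sum_repr]
    _ = ∑ p, J.basis.coord p (u (J.vec q.1 0)) • J.vec p.1 (q.2 + p.2) := by
        simp only [map_sum, map_smul, basis_eq_vec, pow_vec, add_comm]
    _ = _ := by
        simp [LinearMap.sum_apply, shift_basis, Finset.sum_comm (s := Finset.univ (α := I))]

theorem toSubmodule_centralizer_eq_span [Finite I] : (Subalgebra.centralizer R {x}).toSubmodule =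
    Submodule.span R {w | ∃ i j k, b i ≤ k + b j ∧ w = J.shift i j k} := by
  cases nonempty_fintype I
  refine le_antisymm (fun u hu => ?_) (Submodule.span_le.2 ?_)
  · have hu' : Commute x u := (mem_centralizer_singleton R).1 hu
    rw [J.eq_sum_coord_smul_shift hu']
    refine Submodule.sum_mem _ fun j _ => Submodule.sum_mem _ fun p _ => ?_
    by_cases hp : b p.1 ≤ p.2 + b j
    · exact Submodule.smul_mem _ _ (Submodule.subset_span ⟨_, _, _, hp, rfl⟩)
    · rw [J.coord_apply_vec_zero_of_commute hu' (not_le.1 hp), zero_smul]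
      exact zero_mem _
  · rintro _ ⟨i, j, k, h, rfl⟩
    exact J.shift_mem_centralizer h

end Shift

section DiagPart

variable {R W I : Type*} [CommRing R] [AddCommGroup W] [Module R W] [Fintype I] [DecidableEq I]
  {x : End R W} {b : I → ℕ} (J : StringBasis x b)

/-- The diagonal part `u ↦ (eᵢ u eᵢ)ᵢ` of an endomorphism commuting with `x`, for `eᵢ` the
projection to the `i`-th string. Since `eᵢ u eᵢ` is then determined by the image of the `i`-th
generator, which lies in the `i`-th string, the diagonal part is encoded as the vector of `W` with
these images as components. -/
noncomputable def diagPart : End R W →ₗ[R] W :=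
  ∑ i, J.shift i i 0 ∘ₗ LinearMap.applyₗ (J.vec i 0)

theorem diagPart_apply (u : End R W) : J.diagPart u = ∑ i, J.shift i i 0 (u (J.vec i 0)) := by
  simp [diagPart, LinearMap.sum_apply]

theorem diagPart_shift {i j : I} {k : ℕ} (h : b i ≤ k + b j) :
    J.diagPart (J.shift i j k) = if i = j then J.vec i k else 0 := by
  rw [diagPart_apply, Finset.sum_eq_single j]
  · rw [J.shift_vec h, if_pos rfl, J.shift_vec (by simp), zero_add, add_zero]
    exact ite_congr rfl (fun hij => by rw [hij]) fun _ => rfl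
  · intro s _ hs
    simp [J.shift_vec h, hs]
  · simp

theorem diagPart_shift_mul_shift {i j s t : I} {k l : ℕ} (hij : b i ≤ k + b j)
    (hst : b s ≤ l + b t) : J.diagPart (J.shift i j k * J.shift s t l) =
      if s = j ∧ i = t then J.vec i (k + l) else 0 := by
  rw [J.shift_mul_shift hij, apply_ite J.diagPart, map_zero, ite_and]
  refine ite_congr rfl (fun hs => ?_) fun _ => rfl
  rw [J.diagPart_shift (by subst hs; omega), add_comm]

theorem map_diagPart_centralizer :
    (Subalgebra.centralizer R {x}).toSubmodule.map J.diagPart = ⊤ := by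
  rw [eq_top_iff, ← J.basis.span_eq, Submodule.span_le]
  rintro _ ⟨⟨i, k⟩, rfl⟩
  have h : b i ≤ k + b i := Nat.le_add_left _ _
  refine ⟨J.shift i i k, J.shift_mem_centralizer h, ?_⟩
  rw [J.diagPart_shift h, if_pos rfl, basis_eq_vec]

theorem shift_diagPart (i : I) (u : End R W) :
    J.shift i i 0 (J.diagPart u) = J.shift i i 0 (u (J.vec i 0)) := by
  have he := J.completeOrthogonalIdempotents_shift
  rw [diagPart_apply, map_sum, Finset.sum_eq_single i]
  · rw [← Module.End.mul_apply, (he.idem i).eq]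
  · intro j _ hj
    rw [← Module.End.mul_apply, he.ortho hj.symm, LinearMap.zero_apply]
  · simp

theorem shift_mul_mul_shift_eq_zero {u : End R W} (hu : Commute x u) (hdiag : J.diagPart u = 0)
    (i : I) : J.shift i i 0 * u * J.shift i i 0 = 0 := by
  have hgen : J.shift i i 0 (u (J.vec i 0)) = 0 := by rw [← shift_diagPart, hdiag, map_zero]
  have hcomm : Commute x (J.shift i i 0 * u) := (J.commute_shift (by simp)).mul_right hu
  refine J.ext_vec fun s l => ?_
  rw [Module.End.mul_apply, J.shift_vec (by simp)]
  split_ifs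
  · rw [add_zero, J.apply_vec_of_commute hcomm, Module.End.mul_apply, hgen, map_zero,
      LinearMap.zero_apply]
  · simp

theorem centralizer_inf_ker_diagPart_le :
    (Subalgebra.centralizer R {x}).toSubmodule ⊓ LinearMap.ker J.diagPart ≤
      commutatorSpan (Subalgebra.centralizer R {x}).toSubmodule := by
  rintro u ⟨hu, hdiag⟩
  have hx : Commute x u := (mem_centralizer_singleton R).1 hu
  have h := sub_sum_mul_mul_mem_commutatorSpan J.completeOrthogonalIdempotents_shift
    (fun i => J.shift_mem_centralizer (by simp)) hu
  simpa [J.shift_mul_mul_shift_eq_zero hx hdiag] using h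

theorem map_diagPart_commutatorSpan :
    (commutatorSpan (Subalgebra.centralizer R {x}).toSubmodule).map J.diagPart = J.diffSpan := by
  apply le_antisymm
  · rw [Submodule.map_le_iff_le_comap, J.toSubmodule_centralizer_eq_span, commutatorSpan_span_le]
    rintro _ ⟨i, j, k, hij, rfl⟩ _ ⟨s, t, l, hst, rfl⟩
    rw [Submodule.mem_comap, map_sub, J.diagPart_shift_mul_shift hij hst,
      J.diagPart_shift_mul_shift hst hij]
    by_cases h : s = j ∧ i = t
    · obtain ⟨rfl, rfl⟩ := h
      rw [if_pos ⟨rfl, rfl⟩, if_pos ⟨rfl, rfl⟩, add_comm l k]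
      exact J.vec_sub_vec_mem_diffSpan (by omega) (by omega)
    · rw [if_neg h, if_neg fun h' => h h'.symm, sub_zero]
      exact zero_mem _
  · refine Submodule.span_le.2 ?_
    rintro _ ⟨i, j, k, hij, hji, rfl⟩
    have hij' : b i ≤ (b i - b j) + b j := by omega
    have hji' : b j ≤ (k - (b i - b j)) + b i := by omega
    refine ⟨_, commutator_mem_commutatorSpan (J.shift_mem_centralizer hij')
      (J.shift_mem_centralizer hji'), ?_⟩
    rw [map_sub, J.diagPart_shift_mul_shift hij' hji', J.diagPart_shift_mul_shift hji' hij',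
      if_pos ⟨rfl, rfl⟩, if_pos ⟨rfl, rfl⟩, Nat.add_sub_of_le (by omega),
      Nat.sub_add_cancel (by omega)]

end DiagPart

section ConsecutiveDiff

variable {R W : Type*} [CommRing R] [AddCommGroup W] [Module R W] {m : ℕ} {x : End R W}
  {b : Fin (m + 1) → ℕ} (J : StringBasis x b)

/-- The nonzero differences of consecutive strings in `diffSpan`, for `b` antitone. -/
def consecutiveDiff (p : Σ j : Fin m, Fin (b j.succ)) : W :=
  J.vec p.1.castSucc (p.2 + (b p.1.castSucc - b p.1.succ)) -
    J.vec p.1.succ (p.2 + (b p.1.castSucc - b p.1.succ))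

/-- The first term of `consecutiveDiff p` is its leading term: the second one lies in a later
string. -/
theorem linearIndependent_consecutiveDiff (hb : Antitone b) :
    LinearIndependent R J.consecutiveDiff := by
  have hlt (p : Σ j : Fin m, Fin (b j.succ)) :
      p.2 + (b p.1.castSucc - b p.1.succ) < b p.1.castSucc := by
    have := hb p.1.castSucc_le_succ
    omega
  refine linearIndependent_of_triangular (φ := fun p => J.basis.coord ⟨p.1.castSucc, _, hlt p⟩)
    (fun p => p.1) (fun p => ?_) fun p q hqp hle => ?_
  all_goals rw [consecutiveDiff, map_sub, coord_vec, coord_vec]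
  · simp [p.1.castSucc_lt_succ.ne']
  · rw [if_neg, if_neg, sub_zero]
    · rintro ⟨h, -⟩
      exact hle (Fin.castSucc_lt_castSucc_iff.1 (h ▸ q.1.castSucc_lt_succ))
    · rintro ⟨h, hl⟩
      obtain ⟨i, k⟩ := p
      obtain ⟨j, l⟩ := q
      obtain rfl : j = i := Fin.castSucc_injective m h
      exact hqp (congrArg (Sigma.mk j) (Fin.ext (Nat.add_right_cancel hl)))

theorem vec_castSucc_sub_vec_succ_mem_span (hb : Antitone b) {j : Fin m} {k : ℕ}
    (hk : b j.castSucc ≤ k + b j.succ) : J.vec j.castSucc k - J.vec j.succ k ∈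
      Submodule.span R (Set.range J.consecutiveDiff) := by
  have hj : b j.succ ≤ b j.castSucc := hb j.castSucc_le_succ
  by_cases hlt : k < b j.castSucc
  · refine Submodule.subset_span ⟨⟨j, ⟨k - (b j.castSucc - b j.succ), by omega⟩⟩, ?_⟩
    simp only [consecutiveDiff]
    rw [Nat.sub_add_cancel (by omega)]
  · rw [J.vec_eq_zero (by omega), J.vec_eq_zero (by omega), sub_zero]
    exact zero_mem _

theorem vec_sub_vec_mem_span_consecutiveDiff (hb : Antitone b) {i j : Fin (m + 1)} (hij : i ≤ j)
    {k : ℕ} (hk : b i ≤ k + b j) :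
    J.vec i k - J.vec j k ∈ Submodule.span R (Set.range J.consecutiveDiff) := by
  induction j using Fin.induction with
  | zero =>
    rw [Fin.le_zero_iff.1 hij, sub_self]
    exact zero_mem _
  | succ j ih =>
    obtain rfl | hlt := hij.eq_or_lt
    · rw [sub_self]
      exact zero_mem _
    · have hi : i ≤ j.castSucc := Fin.le_castSucc_iff.2 hlt
      have hj : b j.succ ≤ b j.castSucc := hb j.castSucc_le_succ
      rw [← sub_add_sub_cancel _ (J.vec j.castSucc k)]
      exact add_mem (ih hi (by omega))
        (J.vec_castSucc_sub_vec_succ_mem_span hb ((hb hi).trans hk))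

theorem diffSpan_eq_span_consecutiveDiff (hb : Antitone b) :
    J.diffSpan = Submodule.span R (Set.range J.consecutiveDiff) := by
  refine le_antisymm (Submodule.span_le.2 ?_) (Submodule.span_le.2 ?_)
  · rintro _ ⟨i, j, k, hij, hji, rfl⟩
    obtain h | h := le_total i j
    · exact J.vec_sub_vec_mem_span_consecutiveDiff hb h hij
    · rw [← neg_sub]
      exact neg_mem (J.vec_sub_vec_mem_span_consecutiveDiff hb h hji)
  · rintro _ ⟨p, rfl⟩
    have := hb p.1.castSucc_le_succ
    exact J.vec_sub_vec_mem_diffSpan (by omega) (by omega)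

end ConsecutiveDiff

section Finrank

variable {K W : Type*} [Field K] [AddCommGroup W] [Module K W] {m : ℕ} {x : End K W}
  {b : Fin (m + 1) → ℕ}

theorem finrank_eq_finrank_diffSpan_add (J : StringBasis x b) (hb : Antitone b) :
    finrank K W = finrank K J.diffSpan + b 0 := by
  rw [finrank_eq_card_basis J.basis, J.diffSpan_eq_span_consecutiveDiff hb,
    finrank_span_eq_card (J.linearIndependent_consecutiveDiff hb)]
  simp [Fin.sum_univ_succ, add_comm]

theorem finrank_centralizer (J : StringBasis x b) (hb : Antitone b) :
    finrank K (Subalgebra.centralizer K {x}).toSubmodule =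
      finrank K (commutatorSpan (Subalgebra.centralizer K {x}).toSubmodule) + b 0 := by
  have : FiniteDimensional K W := .of_basis J.basis
  set C := (Subalgebra.centralizer K {x}).toSubmodule
  have ker_eq : commutatorSpan C ⊓ LinearMap.ker J.diagPart = C ⊓ LinearMap.ker J.diagPart :=
    le_antisymm (inf_le_inf_right _ (commutatorSpan_toSubmodule_le _))
      (le_inf J.centralizer_inf_ker_diagPart_le inf_le_right)
  have finrank_C := finrank_map_add_finrank_inf_ker J.diagPart C
  have finrank_comm := finrank_map_add_finrank_inf_ker J.diagPart (commutatorSpan C)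
  rw [J.map_diagPart_centralizer, finrank_top, J.finrank_eq_finrank_diffSpan_add hb] at finrank_C
  rw [J.map_diagPart_commutatorSpan, ker_eq] at finrank_comm
  omega

end Finrank

end StringBasis

section Jordan

variable {K W : Type*} [Field K] [AddCommGroup W] [Module K W] [FiniteDimensional K W]

theorem pow_finrank_eq_zero_of_isNilpotent {u : End K W} (hu : IsNilpotent u) :
    u ^ finrank K W = 0 := by
  simpa [hu.charpoly_eq_X_pow_finrank] using u.aeval_self_charpoly

theorem nonempty_stringBasis {u : End K W} (hu : IsNilpotent u) {I : Type*} [DecidableEq I]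
    {V : I → Submodule K W} (hV : DirectSum.IsInternal V) (hinv : ∀ i, ∀ v ∈ V i, u v ∈ V i)
    (hcyc : ∀ i, ∃ e : V i, LinearIndependent K fun k : Fin (finrank K (V i)) =>
      ((u.restrict (hinv i)) ^ (k : ℕ)) e) :
    Nonempty (StringBasis u fun i => finrank K (V i)) := by
  choose e hli using hcyc
  have coe_pow (i : I) (k : ℕ) (v : V i) : ((u.restrict (hinv i) ^ k) v : W) = (u ^ k) v := by
    rw [Module.End.pow_restrict, LinearMap.coe_restrict_apply]
  refine ⟨⟨fun i => e i, hV.collectedBasis fun i => Basis.mk (hli i)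
    ((hli i).span_eq_top_of_card_eq_finrank' (by simp)).ge, fun i k => ?_, fun i => ?_⟩⟩
  · simp [coe_pow]
  · have hres : IsNilpotent (u.restrict (hinv i)) := Module.End.isNilpotent.restrict _ hu
    rw [← coe_pow, pow_finrank_eq_zero_of_isNilpotent hres, LinearMap.zero_apply,
      ZeroMemClass.coe_zero]

end Jordan

section Main

variable {K A B : Type*} [Field K] [Ring A] [Algebra K A] [Ring B] [Algebra K B]

theorem finrank_centralizer_algEquiv_apply (f : A ≃ₐ[K] B) (x : A) :
    finrank K (Subalgebra.centralizer K {f x}).toSubmodule =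
      finrank K (Subalgebra.centralizer K {x}).toSubmodule := by
  rw [← map_centralizer_singleton]
  exact f.toLinearEquiv.finrank_map_eq _

theorem finrank_commutatorSpan_centralizer_algEquiv_apply (f : A ≃ₐ[K] B) (x : A) :
    finrank K (commutatorSpan (Subalgebra.centralizer K {f x}).toSubmodule) =
      finrank K (commutatorSpan (Subalgebra.centralizer K {x}).toSubmodule) := by
  have map_comm := map_commutatorSpan (f : A →ₐ[K] B) (Subalgebra.centralizer K {x}).toSubmodule
  rw [← map_centralizer_singleton]
  refine Eq.trans ?_ (f.toLinearEquiv.finrank_map_eq _)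
  exact congrArg (fun S : Submodule K B => finrank K S) map_comm.symm

theorem codim_derived_sl_centralizer_eq_b1_sub_one_general {I : Type*} [Fintype I] [DecidableEq I]
    (hcard : (Fintype.card I : K) ≠ 0) (x : Matrix I I K) (hnil : IsNilpotent x)
    (m : ℕ) (hm : 0 < m) (V : Fin m → Submodule K (I → K)) (hV : DirectSum.IsInternal V)
    (hmono : Antitone fun i => finrank K (V i))
    (hinv : ∀ i, ∀ v ∈ V i, x.mulVecLin v ∈ V i)
    (hcyc : ∀ i, ∃ e : V i, LinearIndependent K fun k : Fin (finrank K (V i)) =>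
      ((x.mulVecLin.restrict (hinv i)) ^ (k : ℕ)) e) :
    finrank K
        ↥((LinearMap.ker (Matrix.traceLinearMap I K K)) ⊓
          (LinearMap.ker (LinearMap.mulLeft K x - LinearMap.mulRight K x))) + 1 =
      finrank K
        (Submodule.span K
          {w : Matrix I I K |
            ∃ u ∈ (LinearMap.ker (Matrix.traceLinearMap I K K)) ⊓
                (LinearMap.ker (LinearMap.mulLeft K x - LinearMap.mulRight K x)),
            ∃ v ∈ (LinearMap.ker (Matrix.traceLinearMap I K K)) ⊓
                (LinearMap.ker (LinearMap.mulLeft K x - LinearMap.mulRight K x)),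
              w = u * v - v * u}) + finrank K (V ⟨0, hm⟩) := by
  obtain ⟨m, rfl⟩ := Nat.exists_eq_add_one_of_ne_zero hm.ne'
  have htr : Matrix.traceLinearMap I K K 1 ≠ 0 := by simpa using hcard
  have hone : 1 ∈ (Subalgebra.centralizer K {x}).toSubmodule :=
    (Subalgebra.centralizer K {x}).one_mem
  obtain ⟨J⟩ := nonempty_stringBasis (hnil.map Matrix.toLinAlgEquiv') hV hinv hcyc
  rw [← toSubmodule_centralizer_singleton, ← commutatorSpan_eq_span,
    finrank_ker_inf_add_one hone htr, commutatorSpan_ker_inf htr hone,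
    ← finrank_centralizer_algEquiv_apply Matrix.toLinAlgEquiv' x,
    ← finrank_commutatorSpan_centralizer_algEquiv_apply Matrix.toLinAlgEquiv' x]
  exact J.finrank_centralizer hmono

end Main

/-- Let `x ∈ sl(n,ℂ)` be nilpotent of Jordan type the partition `b₁ ≥ … ≥ bₘ ≥ 1` of `n`,
i.e. `ℂⁿ` is the direct sum of `x`-invariant subspaces `V₁ ⊕ … ⊕ Vₘ` with `dim Vᵢ = bᵢ`
on which `x` restricts to a cyclic endomorphism.  Let `𝔰ₓ` denote the centralizer of `x`
in `sl(n,ℂ)`.  Then `dim 𝔰ₓ − dim [𝔰ₓ, 𝔰ₓ] = b₁ − 1`. -/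
theorem codim_derived_sl_centralizer_eq_b1_sub_one
    (n : ℕ) (x : Matrix (Fin n) (Fin n) ℂ) (htr : x.trace = 0) (hnil : IsNilpotent x)
    (m : ℕ) (hm : 0 < m) (V : Fin m → Submodule ℂ (Fin n → ℂ))
    (hV : DirectSum.IsInternal V)
    (b : Fin m → ℕ) (hb : ∀ i, Module.finrank ℂ (V i) = b i)
    (hmono : ∀ i j : Fin m, i ≤ j → b j ≤ b i) (hpos : ∀ i, 1 ≤ b i)
    (hsum : ∑ i, b i = n)
    (hinv : ∀ i, ∀ v ∈ V i, x.mulVecLin v ∈ V i)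
    (hcyc : ∀ i, IsCyclicEnd (x.mulVecLin.restrict (hinv i))) :
    Module.finrank ℂ
        ↥((LinearMap.ker (Matrix.traceLinearMap (Fin n) ℂ ℂ)) ⊓
          (LinearMap.ker (LinearMap.mulLeft ℂ x - LinearMap.mulRight ℂ x))) -
      Module.finrank ℂ
        (Submodule.span ℂ
          {w : Matrix (Fin n) (Fin n) ℂ |
            ∃ u ∈ (LinearMap.ker (Matrix.traceLinearMap (Fin n) ℂ ℂ)) ⊓
                (LinearMap.ker (LinearMap.mulLeft ℂ x - LinearMap.mulRight ℂ x)),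
            ∃ v ∈ (LinearMap.ker (Matrix.traceLinearMap (Fin n) ℂ ℂ)) ⊓
                (LinearMap.ker (LinearMap.mulLeft ℂ x - LinearMap.mulRight ℂ x)),
              w = u * v - v * u}) = b ⟨0, hm⟩ - 1 := by
  have hn : n ≠ 0 := hsum ▸ (Finset.sum_pos (fun i _ => hpos i) ⟨⟨0, hm⟩, Finset.mem_univ _⟩).ne'
  have h := codim_derived_sl_centralizer_eq_b1_sub_one_general (by simpa using hn) x hnil m hm V
    hV (fun i j hij => by simpa only [hb] using hmono i j hij) hinv
    fun i => (hcyc i).imp fun _ => And.left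
  rw [hb] at h
  omega
end

section
/- Let V be a finite-dimensional complex vector space and let x ∈ End(V) admit an invariant-factor decomposition V = V_1 ⊕ … ⊕ V_m with minimal polynomials q_1, …, q_m of degrees b_1 ≥ … ≥ b_m ≥ 1, where q_{j+1} divides q_j. Fix an index i, and let p ∈ ℂ[t] be a nonzero polynomial with deg p ≤ b_i such that dim ker p(x) ≥ ∑_{j=1}^{m} min(b_i, b_j). Then p is a nonzero scalar multiple of q_i. In other words, up to scalar multiplication, q_i is the unique nonzero polynomial of degree at most b_i whose evaluation at x has kernel of dimension at least ∑_{j=1}^{m} min(b_i, b_j). -/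
open Polynomial Module

section CyclicVector

variable {R M : Type*} [CommSemiring R] [AddCommMonoid M] [Module R M]

/-- `e` is a cyclic vector of `u` if `e, u e, u² e, …` span the module. The orbit is indexed by all
of `ℕ`, so that the notion involves no dimension. -/
def IsCyclicVector (u : End R M) (e : M) : Prop :=
  Submodule.span R (Set.range fun n : ℕ => (u ^ n) e) = ⊤

theorem IsCyclicVector.exists_aeval_apply_eq {u : End R M} {e : M} (he : IsCyclicVector u e)
    (v : M) : ∃ f : R[X], aeval u f e = v := by
  let evalAt : R[X] →ₗ[R] M := LinearMap.applyₗ e ∘ₗ (aeval u).toLinearMap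
  have hspan : Submodule.span R (Set.range fun n : ℕ => (u ^ n) e) ≤ LinearMap.range evalAt := by
    rw [Submodule.span_le]
    rintro _ ⟨n, rfl⟩
    exact ⟨X ^ n, by simp [evalAt]⟩
  exact hspan (he ▸ Submodule.mem_top)

theorem coe_aeval_restrict_apply (x : End R M) (W : Submodule R M) (hW : ∀ v ∈ W, x v ∈ W)
    (p : R[X]) (w : W) : (aeval (x.restrict hW) p w : M) = aeval x p w := by
  simp [aeval_eq_sum_range, End.pow_restrict _ hW]

end CyclicVector

theorem IsCyclicEnd.exists_isCyclicVector {V : Type*} [AddCommGroup V] [Module ℂ V]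
    {u : End ℂ V} (hu : IsCyclicEnd u) : ∃ e, IsCyclicVector u e := by
  obtain ⟨e, -, hspan⟩ := hu
  refine ⟨e, top_unique (hspan.ge.trans (Submodule.span_mono ?_))⟩
  rintro _ ⟨k, rfl⟩
  exact ⟨k, rfl⟩

namespace IsCyclicVector

variable {K V : Type*} [Field K] [AddCommGroup V] [Module K V] {u : End K V} {e : V}

theorem finrank_quotient_range_aeval_le (he : IsCyclicVector u e) {p : K[X]} (hp : p ≠ 0) :
    finrank K (V ⧸ LinearMap.range (aeval u p)) ≤ p.natDegree := by
  let φ : degreeLT K p.natDegree →ₗ[K] V ⧸ LinearMap.range (aeval u p) :=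
    (LinearMap.range (aeval u p)).mkQ ∘ₗ LinearMap.applyₗ e ∘ₗ (aeval u).toLinearMap ∘ₗ
      (degreeLT K p.natDegree).subtype
  have hφ : Function.Surjective φ := by
    intro y
    obtain ⟨v, rfl⟩ := Submodule.mkQ_surjective _ y
    obtain ⟨f, rfl⟩ := he.exists_aeval_apply_eq v
    have hmem : f % p ∈ degreeLT K p.natDegree :=
      mem_degreeLT.mpr (degree_eq_natDegree hp ▸ EuclideanDomain.mod_lt f hp)
    have hsplit : aeval u f e = aeval u p (aeval u (f / p) e) + aeval u (f % p) e := by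
      conv_lhs => rw [← EuclideanDomain.div_add_mod f p]
      simp
    refine ⟨⟨f % p, hmem⟩, ?_⟩
    simp [φ, hsplit]
  have hfinite : Module.Finite K (degreeLT K p.natDegree) := .equiv (degreeLTEquiv K _).symm
  exact (LinearMap.finrank_le_finrank_of_surjective hφ).trans_eq
    ((degreeLTEquiv K _).finrank_eq.trans (finrank_fin_fun K))

variable [FiniteDimensional K V]

theorem finrank_ker_aeval_le (he : IsCyclicVector u e) {p : K[X]} (hp : p ≠ 0) :
    finrank K (LinearMap.ker (aeval u p)) ≤ p.natDegree := by
  have hcoker := he.finrank_quotient_range_aeval_le hp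
  have hquot := (LinearMap.range (aeval u p)).finrank_quotient_add_finrank
  have hrank := (aeval u p).finrank_range_add_finrank_ker
  lia

theorem finrank_le_natDegree_minpoly (he : IsCyclicVector u e) :
    finrank K V ≤ (minpoly K u).natDegree := by
  have hker := he.finrank_ker_aeval_le (minpoly.ne_zero (Algebra.IsIntegral.isIntegral u))
  rwa [minpoly.aeval, LinearMap.ker_zero, finrank_top] at hker

end IsCyclicVector

section DirectSumDecomposition

variable {ι R M : Type*} [DecidableEq ι] [Semiring R] [AddCommMonoid M] [Module R M]
  (E : ι → Submodule R M) [DirectSum.Decomposition E] (f : End R M)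

theorem decompose_apply_of_forall_mem (hf : ∀ j, ∀ v ∈ E j, f v ∈ E j) (v : M) (j : ι) :
    (DirectSum.decompose E (f v) j : M) = f (DirectSum.decompose E v j) := by
  induction v using DirectSum.Decomposition.inductionOn E with
  | zero => simp
  | add v w hv hw => simp [hv, hw]
  | @homogeneous k w =>
    rcases eq_or_ne k j with rfl | hkj
    · rw [DirectSum.decompose_of_mem_same E (hf k w w.2), DirectSum.decompose_of_mem_same E w.2]
    · rw [DirectSum.decompose_of_mem_ne E (hf k w w.2) hkj,
        DirectSum.decompose_of_mem_ne E w.2 hkj, map_zero]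

theorem apply_eq_zero_iff_forall_decompose (hf : ∀ j, ∀ v ∈ E j, f v ∈ E j) (v : M) :
    f v = 0 ↔ ∀ j, f (DirectSum.decompose E v j) = 0 := by
  simp_rw [← decompose_apply_of_forall_mem E f hf, ZeroMemClass.coe_eq_zero]
  rw [← (DirectSum.decompose E).injective.eq_iff, DirectSum.decompose_zero]
  exact DFinsupp.ext_iff

end DirectSumDecomposition

section InternalDirectSum

variable {ι K V : Type*} [Fintype ι] [DecidableEq ι] [AddCommGroup V]

theorem finrank_ker_eq_sum_finrank_ker_restrict [DivisionRing K] [Module K V]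
    [FiniteDimensional K V] {E : ι → Submodule K V} (hE : DirectSum.IsInternal E)
    (f : End K V) (hf : ∀ j, ∀ v ∈ E j, f v ∈ E j) :
    finrank K (LinearMap.ker f) = ∑ j, finrank K (LinearMap.ker (f.restrict (hf j))) := by
  let := hE.chooseDecomposition
  let components : V ≃ₗ[K] ∀ j, E j :=
    DirectSum.decomposeLinearEquiv E ≪≫ₗ DirectSum.linearEquivFunOnFintype K ι fun j => E j
  let φ : (∀ j, LinearMap.ker (f.restrict (hf j))) →ₗ[K] V :=
    components.symm ∘ₗ LinearMap.piMap fun j => (LinearMap.ker (f.restrict (hf j))).subtype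
  have hinj : Function.Injective φ :=
    components.symm.injective.comp (Function.Injective.piMap fun j => Subtype.val_injective)
  have hrange : LinearMap.range φ = LinearMap.ker f := by
    ext v
    rw [LinearMap.mem_ker, apply_eq_zero_iff_forall_decompose E f hf]
    constructor
    · rintro ⟨w, rfl⟩ j
      have hw : components (φ w) j = w j := congrFun (components.apply_symm_apply _) j
      change f (components (φ w) j) = 0
      rw [hw]
      exact congrArg Subtype.val (w j).2
    · intro hv
      refine ⟨fun j => ⟨components v j, Subtype.ext (hv j)⟩, ?_⟩
      exact components.symm_apply_apply v
  rw [← hrange, LinearMap.finrank_range_of_inj hinj, finrank_pi_fintype]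

theorem finrank_ker_aeval_eq_sum [Field K] [Module K V] [FiniteDimensional K V]
    {E : ι → Submodule K V} (hE : DirectSum.IsInternal E) (x : End K V)
    (hinv : ∀ j, ∀ v ∈ E j, x v ∈ E j) (p : K[X]) :
    finrank K (LinearMap.ker (aeval x p)) =
      ∑ j, finrank K (LinearMap.ker (aeval (x.restrict (hinv j)) p)) := by
  have hmem (j : ι) (v : V) (hv : v ∈ E j) : aeval x p v ∈ E j :=
    aeval_apply_smul_mem_of_le_comap hv p x (hinv j)
  have hrestrict (j : ι) : (aeval x p).restrict (hmem j) = aeval (x.restrict (hinv j)) p :=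
    LinearMap.ext fun w => Subtype.ext (coe_aeval_restrict_apply x (E j) (hinv j) p w).symm
  rw [finrank_ker_eq_sum_finrank_ker_restrict hE (aeval x p) hmem]
  exact Finset.sum_congr rfl fun j _ => by rw [hrestrict j]

end InternalDirectSum

theorem eq_invariant_factor_up_to_scalar_general {ι K V : Type*} [Fintype ι] [DecidableEq ι]
    [Field K] [AddCommGroup V] [Module K V] [FiniteDimensional K V] {x : End K V}
    {E : ι → Submodule K V} (hE : DirectSum.IsInternal E) (hinv : ∀ j, ∀ v ∈ E j, x v ∈ E j)
    (hcyc : ∀ j, ∃ e, IsCyclicVector (x.restrict (hinv j)) e)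
    (i : ι) {p : K[X]} (hp : p ≠ 0) (hpdeg : p.natDegree ≤ finrank K (E i))
    (hker : ∑ j, min (finrank K (E i)) (finrank K (E j)) ≤ finrank K (LinearMap.ker (aeval x p))) :
    ∃ c : K, c ≠ 0 ∧ p = c • minpoly K (x.restrict (hinv i)) := by
  choose e he using hcyc
  have hle (j : ι) (_ : j ∈ Finset.univ) :
      finrank K (LinearMap.ker (aeval (x.restrict (hinv j)) p)) ≤
        min (finrank K (E i)) (finrank K (E j)) :=
    le_min (((he j).finrank_ker_aeval_le hp).trans hpdeg) (Submodule.finrank_le _)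
  have heq := (Finset.sum_eq_sum_iff_of_le hle).mp <| (Finset.sum_le_sum hle).antisymm <|
    hker.trans_eq (finrank_ker_aeval_eq_sum hE x hinv p)
  have hvanish : aeval (x.restrict (hinv i)) p = 0 := by
    rw [← LinearMap.ker_eq_top]
    exact Submodule.eq_top_of_finrank_eq ((heq i (Finset.mem_univ i)).trans (min_self _))
  refine ⟨p.leadingCoeff, leadingCoeff_ne_zero.mpr hp, ?_⟩
  rw [smul_eq_C_mul]
  exact eq_leadingCoeff_mul_of_monic_of_dvd_of_natDegree_le
    (minpoly.monic (Algebra.IsIntegral.isIntegral _)) (minpoly.dvd _ _ hvanish)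
    (hpdeg.trans (he i).finrank_le_natDegree_minpoly)

/-- Let `x ∈ End(V)` admit an invariant-factor decomposition `V = V₁ ⊕ … ⊕ Vₘ` with
minimal polynomials `q₁, …, qₘ` of degrees `b₁ ≥ … ≥ bₘ ≥ 1`, where `qⱼ₊₁ ∣ qⱼ`.
If `p` is a nonzero polynomial with `deg p ≤ bᵢ` and `dim ker p(x) ≥ ∑ⱼ min(bᵢ, bⱼ)`,
then `p` is a nonzero scalar multiple of `qᵢ`. -/
theorem eq_invariant_factor_up_to_scalar
    (V : Type*) [AddCommGroup V] [Module ℂ V] [FiniteDimensional ℂ V]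
    (x : Module.End ℂ V)
    (m : ℕ) (E : Fin m → Submodule ℂ V) (hE : DirectSum.IsInternal E)
    (hne : ∀ j, E j ≠ ⊥)
    (hinv : ∀ j, ∀ v ∈ E j, x v ∈ E j)
    (hcyc : ∀ j, IsCyclicEnd (x.restrict (hinv j)))
    (q : Fin m → Polynomial ℂ) (hq : ∀ j, q j = minpoly ℂ (x.restrict (hinv j)))
    (b : Fin m → ℕ) (hbE : ∀ j, Module.finrank ℂ (E j) = b j)
    (hdeg : ∀ j, (q j).natDegree = b j)
    (hmono : ∀ j k : Fin m, j ≤ k → b k ≤ b j) (hpos : ∀ j, 1 ≤ b j)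
    (hdvd : ∀ (j : ℕ) (h : j + 1 < m), q ⟨j + 1, h⟩ ∣ q ⟨j, Nat.lt_of_succ_lt h⟩)
    (i : Fin m) (p : Polynomial ℂ) (hp : p ≠ 0) (hpdeg : p.natDegree ≤ b i)
    (hker : ∑ j : Fin m, min (b i) (b j) ≤
      Module.finrank ℂ (LinearMap.ker (Polynomial.aeval x p))) :
    ∃ c : ℂ, c ≠ 0 ∧ p = c • q i := by
  obtain rfl : b = fun j => Module.finrank ℂ (E j) := funext fun j => (hbE j).symm
  rw [hq]
  exact eq_invariant_factor_up_to_scalar_general hE hinv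
    (fun j => (hcyc j).exists_isCyclicVector) i hp hpdeg hker
end
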